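/- arXiv:1812.11111 — 2 statements merged into one kernel-verified Lean document; each statement's English description precedes it below -/
import Mathlib

section
/- (Sufficiency half of Theorem 2.) For every integer n ≥ 1 and every vertex v, if for every layer l the number of neighbors w of v in layer l such that alive (n−1) l v w holds is at least k l, then v ∈ S_n. -/
/-- The pruning operator: keep the vertices of `S` that have, in every layer `i`,
at least `k i` neighbors (in layer `i`) inside `S`. -/
def prune {V : Type*} {R : ℕ} (G : Fin R → SimpleGraph V) [∀ i, DecidableRel (G i).Adj]
    (k : Fin R → ℕ) (S : Set V) : Set V :=
  {v | v ∈ S ∧ ∀ i : Fin R, k i ≤ Nat.card {w : V // (G i).Adj v w ∧ w ∈ S}}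

/-- The pruning sequence: `S_0` is the set of all vertices, `S_{n+1} = P (S_n)`. -/
def pruneSeq {V : Type*} {R : ℕ} (G : Fin R → SimpleGraph V) [∀ i, DecidableRel (G i).Adj]
    (k : Fin R → ℕ) : ℕ → Set V
  | 0 => Set.univ
  | n + 1 => prune G k (pruneSeq G k n)

/-- Aliveness of the stub `(e_{[i]}, w)`, where `e_{[i]}` is the layer-`i` edge from `v` to `w`:
`alive 0 i v w` holds whenever `v, w` are adjacent in layer `i`, and `alive (n+1) i v w` holds
iff `v, w` are adjacent in layer `i` and for every layer `l`, the number of vertices `u`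
adjacent to `w` in layer `l` with `(l, u) ≠ (i, v)` such that `alive n l w u` holds is at
least `k l - 1` if `l = i` and at least `k l` otherwise. -/
def alive {V : Type*} {R : ℕ} (G : Fin R → SimpleGraph V) [∀ i, DecidableRel (G i).Adj]
    (k : Fin R → ℕ) : ℕ → Fin R → V → V → Prop
  | 0, i, v, w => (G i).Adj v w
  | n + 1, i, v, w => (G i).Adj v w ∧ ∀ l : Fin R,
      (if l = i then k l - 1 else k l) ≤
        Nat.card {u : V // (G l).Adj w u ∧ (l, u) ≠ (i, v) ∧ alive G k n l w u}

/-!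
Aliveness can only be lost, so if `v` has enough alive stubs at stage `n + 1`, it already has
enough at stage `n`; then every stub pointing to `v` is alive at stage `n + 1`, and hence at
stage `n`. Consequently, when the stub from `v` to `w` is alive at stage `n + 1`, the edge from `w`
back to `v`, which its definition leaves out of the count together with one unit of the
threshold, is itself alive at stage `n`; putting both back shows that `w` has enough alive stubs
at stage `n`. By induction these `w` survive `n + 1` prunings, and there are enough of them for
`v` to survive one more.
-/

section Alive

variable {V : Type*} {R : ℕ} (G : Fin R → SimpleGraph V) [∀ i, DecidableRel (G i).Adj]
  (k : Fin R → ℕ)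

/-- The layer-`l` neighbors `w` of `v` whose stub from `v` is alive at stage `n`. Adjacency
already follows from aliveness; it is repeated to match the count in `alive`. -/
def aliveNeighborSet (n : ℕ) (l : Fin R) (v : V) : Set V :=
  {w | (G l).Adj v w ∧ alive G k n l v w}

/-- The vertices that meet the threshold of every layer when only alive stubs are counted: the
message-passing counterpart of `pruneSeq G k (n + 1)`. -/
def aliveVertices (n : ℕ) : Set V :=
  {v | ∀ l, k l ≤ (aliveNeighborSet G k n l v).ncard}

variable {G k} {n : ℕ} {i : Fin R} {v w : V}

theorem alive_succ_iff :
    alive G k (n + 1) i v w ↔ (G i).Adj v w ∧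
      k i - 1 ≤ (aliveNeighborSet G k n i w \ {v}).ncard ∧
      ∀ l ≠ i, k l ≤ (aliveNeighborSet G k n l w).ncard := by
  have nonbacktracking_same :
      {u | (G i).Adj w u ∧ (i, u) ≠ (i, v) ∧ alive G k n i w u} =
        aliveNeighborSet G k n i w \ {v} := by
    ext u
    simp only [aliveNeighborSet, Set.mem_ofPred_eq, Set.mem_sdiff, Set.mem_singleton_iff, ne_eq,
      Prod.mk.injEq, true_and]
    tauto
  have nonbacktracking_other (l : Fin R) (hl : l ≠ i) :
      {u | (G l).Adj w u ∧ (l, u) ≠ (i, v) ∧ alive G k n l w u} =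
        aliveNeighborSet G k n l w := by
    ext u
    simp [aliveNeighborSet, hl]
  refine and_congr_right fun _ => ⟨fun h => ⟨?_, fun l hl => ?_⟩, fun h l => ?_⟩
  · exact (if_pos rfl).ge.trans ((h i).trans_eq (congrArg Set.ncard nonbacktracking_same))
  · exact (if_neg hl).ge.trans ((h l).trans_eq (congrArg Set.ncard (nonbacktracking_other l hl)))
  · split_ifs with hl
    · subst hl
      exact h.1.trans_eq (congrArg Set.ncard nonbacktracking_same.symm)
    · exact (h.2 l hl).trans_eq (congrArg Set.ncard (nonbacktracking_other l hl).symm)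

theorem alive_succ_of_mem_aliveVertices (hvw : (G i).Adj v w) (hw : w ∈ aliveVertices G k n) :
    alive G k (n + 1) i v w :=
  alive_succ_iff.2 ⟨hvw,
    (Nat.sub_le_sub_right (hw i) 1).trans (Set.pred_ncard_le_ncard_sdiff_singleton _ _),
    fun l _ => hw l⟩

variable [∀ i v, Finite ((G i).neighborSet v)]

theorem finite_aliveNeighborSet : (aliveNeighborSet G k n i v).Finite :=
  ((G i).neighborSet v).toFinite.subset fun _ hw => hw.1

theorem alive_of_alive_succ (h : alive G k (n + 1) i v w) : alive G k n i v w := by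
  induction n generalizing i v w with
  | zero => exact h.1
  | succ n ih =>
    have hsub (l : Fin R) : aliveNeighborSet G k (n + 1) l w ⊆ aliveNeighborSet G k n l w :=
      fun _ hu => ⟨hu.1, ih hu.2⟩
    obtain ⟨hvw, hi, hother⟩ := alive_succ_iff.1 h
    exact alive_succ_iff.2 ⟨hvw,
      hi.trans (Set.ncard_le_ncard (Set.sdiff_subset_sdiff_left (hsub i))
        finite_aliveNeighborSet.sdiff),
      fun l hl => (hother l hl).trans (Set.ncard_le_ncard (hsub l) finite_aliveNeighborSet)⟩

theorem aliveVertices_succ_subset : aliveVertices G k (n + 1) ⊆ aliveVertices G k n :=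
  fun _ hv l => (hv l).trans <| Set.ncard_le_ncard
    (fun _ hw => ⟨hw.1, alive_of_alive_succ hw.2⟩) finite_aliveNeighborSet

theorem mem_aliveVertices_of_alive_succ (hvw : alive G k (n + 1) i v w)
    (hwv : alive G k n i w v) : w ∈ aliveVertices G k n := by
  obtain ⟨hadj, hi, hother⟩ := alive_succ_iff.1 hvw
  intro l
  obtain rfl | hl := eq_or_ne l i
  · have hv : v ∈ aliveNeighborSet G k n l w := ⟨hadj.symm, hwv⟩
    calc k l ≤ (aliveNeighborSet G k n l w \ {v}).ncard + 1 := Nat.sub_le_iff_le_add.1 hi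
      _ = (aliveNeighborSet G k n l w).ncard :=
        Set.ncard_sdiff_singleton_add_one hv finite_aliveNeighborSet
  · exact hother l hl

theorem mem_aliveVertices_of_mem_aliveNeighborSet (hv : v ∈ aliveVertices G k n)
    (hw : w ∈ aliveNeighborSet G k (n + 1) i v) : w ∈ aliveVertices G k n :=
  mem_aliveVertices_of_alive_succ hw.2
    (alive_of_alive_succ (alive_succ_of_mem_aliveVertices hw.1.symm hv))

end Alive

theorem mem_pruneSeq_of_alive_general {V : Type*} {R : ℕ} (G : Fin R → SimpleGraph V)
    [∀ i, DecidableRel (G i).Adj] [∀ i v, Finite ((G i).neighborSet v)] (k : Fin R → ℕ)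
    (n : ℕ) (v : V)
    (h : ∀ l : Fin R, k l ≤ Nat.card {w : V // (G l).Adj v w ∧ alive G k n l v w}) :
    v ∈ pruneSeq G k (n + 1) := by
  have hfin (S : Set V) (l : Fin R) (v : V) : {w | (G l).Adj v w ∧ w ∈ S}.Finite :=
    ((G l).neighborSet v).toFinite.subset fun _ hw => hw.1
  induction n generalizing v with
  | zero =>
    exact ⟨Set.mem_univ v, fun l =>
      (h l).trans (Nat.card_mono (hfin _ l v) fun w hw => ⟨hw.1, Set.mem_univ w⟩)⟩
  | succ n ih =>
    have hv : v ∈ aliveVertices G k n := aliveVertices_succ_subset h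
    have hsurvive (l : Fin R) (w : V) (hw : w ∈ aliveNeighborSet G k (n + 1) l v) :
        w ∈ pruneSeq G k (n + 1) :=
      ih w (mem_aliveVertices_of_mem_aliveNeighborSet hv hw)
    exact ⟨ih v hv, fun l =>
      (h l).trans (Nat.card_mono (hfin _ l v) fun w hw => ⟨hw.1, hsurvive l w hw⟩)⟩

/-- Sufficiency half of Theorem 2: for `n ≥ 1`, if in every layer `l` the vertex `v` has at
least `k l` neighbors `w` with `alive (n-1) l v w`, then `v` survives the `n`-th pruning. -/
theorem mem_pruneSeq_of_alive {V : Type*} [Fintype V] {R : ℕ}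
    (G : Fin R → SimpleGraph V) [∀ i, DecidableRel (G i).Adj] (k : Fin R → ℕ)
    (n : ℕ) (hn : 1 ≤ n) (v : V)
    (h : ∀ l : Fin R, k l ≤ Nat.card {w : V // (G l).Adj v w ∧ alive G k (n - 1) l v w}) :
    v ∈ pruneSeq G k n := by
  obtain ⟨m, rfl⟩ := Nat.exists_eq_add_of_le' hn
  exact mem_pruneSeq_of_alive_general G k m v h
end

section
/- For every n ≥ 0 and every vertex w with w ∈ S_n, every incoming stub of w is n-alive: for every layer l and every vertex v adjacent to w in layer l, alive n l v w holds. -/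
/-!
In every layer `l`, a vertex `w ∈ S_{n+1}` has at least `k l` neighbors in `S_n`, and by induction
the stub from `w` to each of them is `n`-alive. The stub of the layer-`i` edge from `v` to `w` is
tested on the same neighbors except `v` in layer `i`, so the count drops by at most one in layer
`i` and not at all in the others: exactly the slack in the definition of aliveness.
-/

theorem ite_sub_one_le_ncard_sep_pair_ne {ι α : Type*} [DecidableEq ι] {m : ℕ} {A : Set α}
    (hm : m ≤ A.ncard) (l i : ι) (v : α) :
    (if l = i then m - 1 else m) ≤ {u ∈ A | (l, u) ≠ (i, v)}.ncard := by
  split_ifs with hli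
  · have hdiff : {u ∈ A | (l, u) ≠ (i, v)} = A \ {v} := by ext u; simp [hli]
    rw [hdiff]
    exact (Nat.sub_le_sub_right hm 1).trans (Set.pred_ncard_le_ncard_sdiff_singleton A v)
  · have hself : {u ∈ A | (l, u) ≠ (i, v)} = A := by ext u; simp [hli]
    rwa [hself]

section Pruning

variable {V : Type*} {R : ℕ} {G : Fin R → SimpleGraph V} [∀ i, DecidableRel (G i).Adj]
  {k : Fin R → ℕ}

theorem alive_succ_of_mem_prune {S : Set V} {n : ℕ} {i : Fin R} {v w : V}
    [∀ l, Finite ((G l).neighborSet w)]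
    (hS : ∀ u ∈ S, ∀ l, (G l).Adj w u → alive G k n l w u)
    (hw : w ∈ prune G k S) (hvw : (G i).Adj v w) : alive G k (n + 1) i v w := by
  refine ⟨hvw, fun l => ?_⟩
  have hcard : k l ≤ {u | (G l).Adj w u ∧ u ∈ S}.ncard := hw.2 l
  have hfin : {u | (G l).Adj w u ∧ (l, u) ≠ (i, v) ∧ alive G k n l w u}.Finite :=
    ((G l).neighborSet w).toFinite.subset fun _ hu => hu.1
  calc (if l = i then k l - 1 else k l)
      ≤ {u ∈ {u | (G l).Adj w u ∧ u ∈ S} | (l, u) ≠ (i, v)}.ncard :=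
        ite_sub_one_le_ncard_sep_pair_ne hcard l i v
    _ ≤ {u | (G l).Adj w u ∧ (l, u) ≠ (i, v) ∧ alive G k n l w u}.ncard :=
        Set.ncard_le_ncard (fun u ⟨⟨hwu, huS⟩, hne⟩ => ⟨hwu, hne, hS u huS l hwu⟩) hfin

theorem alive_of_mem_pruneSeq'_general [∀ i, (G i).LocallyFinite] {n : ℕ} {w : V}
    (hw : w ∈ pruneSeq G k n) {l : Fin R} {v : V} (hvw : (G l).Adj v w) :
    alive G k n l v w := by
  induction n generalizing l v w with
  | zero => exact hvw
  | succ n ih => exact alive_succ_of_mem_prune (fun _ hu _ hwu => ih hu hwu) hw hvw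

end Pruning

/-- If `w` survives `n` pruning steps, then every incoming stub of `w` is `n`-alive:
for every layer `l` and every `v` adjacent to `w` in layer `l`, `alive n l v w` holds. -/
theorem alive_of_mem_pruneSeq' {V : Type*} [Fintype V] {R : ℕ}
    (G : Fin R → SimpleGraph V) [∀ i, DecidableRel (G i).Adj] (k : Fin R → ℕ)
    (n : ℕ) (w : V) (hw : w ∈ pruneSeq G k n) :
    ∀ (l : Fin R) (v : V), (G l).Adj v w → alive G k n l v w :=
  fun _ _ hvw => alive_of_mem_pruneSeq'_general hw hvw
end
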